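/- arXiv:1908.01690 — 2 statements merged into one kernel-verified Lean document; each statement's English description precedes it below -/
import Mathlib

section
/- Let a and n be positive integers with a odd. Let ε = [n ≢ 0 (mod 3)] and A = ⌊(2^a − 1)n / (3·2^{ν_2(n)})⌋, and let δ = ((n mod 6) − 1)/2 if n is odd, δ = 0 if n ≡ 0 (mod 6), δ = ⌈ν_2(n)/2⌉ + 1 if n ≡ 4 (mod 6), and δ = ⌈(ν_2(n) + 1)/2⌉ if n ≡ 2 (mod 6). Then ν_2( C(2^a n, n)_F ) = δ + A − ((a−1)/2)·ε − ν_2(A!) = δ + s_2(A) − ((a−1)/2)·ε. -/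
/-! The `2`-adic valuation of `F_m` is `0` when `3 ∤ m`, `1` when `m` is an odd multiple of `3`, and
`ν₂(m) + 2` when `6 ∣ m` (`padicValNat_fib_three_mul`). Summing over `i ≤ m` and applying Legendre's
formula, the valuation of `F_1 ⋯ F_m` is `2t + ⌊t/2⌋ - s₂(t)` with `t = ⌊m/3⌋`
(`padicValNat_fibFac_add`). The valuation of the Fibonomial coefficient is therefore a combination
of the floors and digit sums of `⌊2^a n/3⌋`, `⌊n/3⌋` and `⌊(2^a - 1)n/3⌋`.

The digit sums are controlled by one identity (`digitSum_two_pow_mul_div_three`): writing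
`N = 3q + r` gives `⌊2^v N/3⌋ = 2^v q + ⌊2^v r/3⌋` with no carry, and for `r ≠ 0` the number
`⌊2^v r/3⌋` has binary expansion `…10101` or `…101010`. It is used once to split `2^a n`, and once to split
`(2^a - 1)n = 2^v · (2^a - 1)u`, where `v = ν₂(n)` and `n = 2^v u`; the second use produces `s₂(A)`.
What remains is a comparison of floors in each residue class of `n` modulo `6`. -/

/-- The Fibonomial coefficient `C(m,k)_F = (F_{m-k+1} ⋯ F_m)/(F_1 ⋯ F_k)`,
with `C(m,0)_F = 1` and `C(m,k)_F = 0` for `k > m`. -/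
def fibBinom (m k : ℕ) : ℕ :=
  (∏ i ∈ Finset.range k, Nat.fib (m - i)) / ∏ i ∈ Finset.range k, Nat.fib (i + 1)

/-- The rank of appearance `z(n)`: the least positive `m` with `n ∣ F_m`. -/
noncomputable def fibRank (n : ℕ) : ℕ := sInf {m : ℕ | 0 < m ∧ n ∣ Nat.fib m}

/-- The sum of the digits of `n` in base `q`. -/
def digitSum (q n : ℕ) : ℕ := (Nat.digits q n).sum

/-! ### Valuations of Fibonacci numbers -/

/-- The Fibonacci sequence modulo `8` has period `12`. -/
lemma fib_mod_eight (q r : ℕ) : Nat.fib (12 * q + r) % 8 = Nat.fib r % 8 := by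
  induction q with
  | zero => simp
  | succ q ih =>
    have h : 12 * (q + 1) + r = (12 * q + r) + 11 + 1 := by ring
    have h1 : Nat.fib 11 = 89 := by decide
    have h2 : Nat.fib 12 = 144 := by decide
    rw [h, Nat.fib_add, h1, h2]
    omega

lemma fib_odd_of_not_three_dvd {m : ℕ} (h : m % 3 ≠ 0) : Nat.fib m % 2 = 1 := by
  have h1 := fib_mod_eight (m / 12) (m % 12)
  rw [Nat.div_add_mod] at h1
  have hr : m % 12 < 12 := Nat.mod_lt _ (by norm_num)
  have h3 : m % 12 % 3 ≠ 0 := by omega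
  generalize m % 12 = r at *
  interval_cases r <;> norm_num at h1 h3 <;> omega

lemma padicValNat_two_of_mod_four {x : ℕ} (h : x % 4 = 2) : padicValNat 2 x = 1 := by
  obtain ⟨y, rfl⟩ : ∃ y, x = 2 * y := ⟨x / 2, by omega⟩
  rw [padicValNat.mul (by norm_num) (by omega), padicValNat_self,
    padicValNat.eq_zero_of_not_dvd (by omega)]

lemma padicValNat_two_of_mod_eight {x : ℕ} (h : x % 8 = 4) : padicValNat 2 x = 2 := by
  obtain ⟨y, rfl⟩ : ∃ y, x = 2 * y := ⟨x / 2, by omega⟩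
  rw [padicValNat.mul (by norm_num) (by omega), padicValNat_self,
    padicValNat_two_of_mod_four (by omega)]

/-- The residues modulo `8` of `F_{3j}` and of the Lucas number `L_{3j} = 2F_{3j+1} - F_{3j}`. -/
lemma fib_three_mul_mod (j : ℕ) :
    (j % 2 = 1 → Nat.fib (3 * j) % 4 = 2 ∧
      (2 * Nat.fib (3 * j + 1) - Nat.fib (3 * j)) % 8 = 4) ∧
    (j % 2 = 0 → (2 * Nat.fib (3 * j + 1) - Nat.fib (3 * j)) % 4 = 2) := by
  have hle : Nat.fib (3 * j) ≤ Nat.fib (3 * j + 1) := Nat.fib_le_fib_succ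
  have h1 := fib_mod_eight (j / 4) (3 * (j % 4))
  have h2 := fib_mod_eight (j / 4) (3 * (j % 4) + 1)
  rw [show 12 * (j / 4) + 3 * (j % 4) = 3 * j by omega] at h1
  rw [show 12 * (j / 4) + (3 * (j % 4) + 1) = 3 * j + 1 by omega] at h2
  have hr : j % 4 < 4 := Nat.mod_lt _ (by norm_num)
  have h3 : j % 2 = j % 4 % 2 := by omega
  rw [h3]
  generalize j % 4 = r at *
  interval_cases r <;> norm_num at h1 h2 ⊢ <;> omega

/-- Repeated doubling via `F_{2m} = F_m L_m`: each factor `L_{3i}` contributes `2` when `i` is odd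
and `1` when `i` is even. -/
lemma padicValNat_fib_three_mul (j : ℕ) (hj : 0 < j) :
    padicValNat 2 (Nat.fib (3 * j)) = if j % 2 = 1 then 1 else padicValNat 2 j + 2 := by
  induction j using Nat.strong_induction_on with
  | _ j ih =>
    split_ifs with h
    · exact padicValNat_two_of_mod_four ((fib_three_mul_mod j).1 h).1
    · obtain ⟨i, rfl⟩ : ∃ i, j = 2 * i := ⟨j / 2, by omega⟩
      have hi : 0 < i := by omega
      have hf : Nat.fib (3 * i) ≠ 0 := (Nat.fib_pos.2 (by omega)).ne'
      have hm := fib_three_mul_mod i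
      have hI := ih i (by omega) hi
      have hne : 2 * Nat.fib (3 * i + 1) - Nat.fib (3 * i) ≠ 0 := by
        intro h0
        rw [h0] at hm
        omega
      rw [show 3 * (2 * i) = 2 * (3 * i) by ring, Nat.fib_two_mul,
        padicValNat.mul hf hne, padicValNat.mul (by norm_num) hi.ne', padicValNat_self, hI]
      split_ifs with hp
      · rw [padicValNat_two_of_mod_eight (hm.1 hp).2,
          padicValNat.eq_zero_of_not_dvd (by omega : ¬ 2 ∣ i)]
      · rw [padicValNat_two_of_mod_four (hm.2 (by omega))]
        omega

/-! ### Fibonacci factorials -/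

/-- The Fibonacci factorial `F_1 F_2 ⋯ F_m`. -/
def fibFac (m : ℕ) : ℕ := ∏ i ∈ Finset.range m, Nat.fib (i + 1)

lemma fibFac_succ (m : ℕ) : fibFac (m + 1) = fibFac m * Nat.fib (m + 1) :=
  Finset.prod_range_succ _ _

lemma fibFac_ne_zero (m : ℕ) : fibFac m ≠ 0 :=
  Finset.prod_ne_zero_iff.2 fun _ _ => (Nat.fib_pos.2 (Nat.succ_pos _)).ne'

lemma padicValNat_fibFac (m : ℕ) :
    padicValNat 2 (fibFac m) = m / 3 + m / 3 / 2 + padicValNat 2 (Nat.factorial (m / 3)) := by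
  induction m with
  | zero => simp [fibFac]
  | succ m ih =>
    rw [fibFac_succ, padicValNat.mul (fibFac_ne_zero m) (Nat.fib_pos.2 (by omega : 0 < m + 1)).ne', ih]
    by_cases h : (m + 1) % 3 = 0
    · obtain ⟨t, ht⟩ : ∃ t, m + 1 = 3 * (t + 1) := ⟨m / 3, by omega⟩
      rw [ht, padicValNat_fib_three_mul (t + 1) (by omega), show m / 3 = t by omega,
        show 3 * (t + 1) / 3 = t + 1 by omega, Nat.factorial_succ,
        padicValNat.mul (by omega : t + 1 ≠ 0) (Nat.factorial_ne_zero t)]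
      split_ifs with hp
      · rw [padicValNat.eq_zero_of_not_dvd (by omega : ¬ 2 ∣ t + 1)]
        omega
      · omega
    · rw [padicValNat.eq_zero_of_not_dvd
        (by have := fib_odd_of_not_three_dvd h; omega : ¬ 2 ∣ Nat.fib (m + 1)),
        show (m + 1) / 3 = m / 3 by omega]
      omega

/-- Legendre's formula for the prime `2`. -/
lemma padicValNat_factorial_add_digitSum (t : ℕ) :
    padicValNat 2 (Nat.factorial t) + digitSum 2 t = t := by
  have h := sub_one_mul_padicValNat_factorial (p := 2) t
  have h2 := Nat.digit_sum_le 2 t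
  unfold digitSum
  omega

lemma padicValNat_fibFac_add (m : ℕ) :
    padicValNat 2 (fibFac m) + digitSum 2 (m / 3) = 2 * (m / 3) + m / 3 / 2 := by
  have h := padicValNat_fibFac m
  have h2 := padicValNat_factorial_add_digitSum (m / 3)
  omega

/-- Integrality of the Fibonomial coefficients, from
`F_{j+k+2} = F_j F_{k+1} + F_{j+1} F_{k+2}` as in Pascal's rule. -/
lemma fibFac_mul_dvd (j k : ℕ) : fibFac j * fibFac k ∣ fibFac (j + k) := by
  induction j generalizing k with
  | zero => simp [fibFac]
  | succ j ihj =>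
    induction k with
    | zero => simp [fibFac]
    | succ k ihk =>
      have h1 : fibFac (j + 1) * fibFac (k + 1) ∣
          fibFac (j + k + 1) * (Nat.fib (k + 1) * Nat.fib j) := by
        obtain ⟨c, hc⟩ := ihk
        rw [show j + 1 + k = j + k + 1 by ring] at hc
        exact ⟨c * Nat.fib j, by rw [hc, fibFac_succ k]; ring⟩
      have h2 : fibFac (j + 1) * fibFac (k + 1) ∣
          fibFac (j + k + 1) * (Nat.fib (j + 1) * Nat.fib (k + 2)) := by
        obtain ⟨c, hc⟩ := ihj (k + 1)
        rw [show j + (k + 1) = j + k + 1 by ring] at hc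
        exact ⟨c * Nat.fib (k + 2), by rw [hc, fibFac_succ j]; ring⟩
      rw [show j + 1 + (k + 1) = j + k + 1 + 1 by ring, fibFac_succ (j + k + 1),
        show j + k + 1 + 1 = j + (k + 1) + 1 by ring, Nat.fib_add j (k + 1), mul_add]
      exact dvd_add (by rwa [mul_comm (Nat.fib (k + 1))] at h1) h2

lemma prod_fib_sub_mul (k l : ℕ) :
    (∏ i ∈ Finset.range k, Nat.fib (l + k - i)) * fibFac l = fibFac (l + k) := by
  induction k with
  | zero => simp
  | succ k ih =>
    rw [Finset.prod_range_succ']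
    have h : ∀ i ∈ Finset.range k, Nat.fib (l + (k + 1) - (i + 1)) = Nat.fib (l + k - i) :=
      fun i _ => by congr 1; omega
    rw [Finset.prod_congr rfl h, ← add_assoc, fibFac_succ, ← ih, Nat.sub_zero]
    ring

lemma padicValNat_fibBinom (k l : ℕ) :
    padicValNat 2 (fibBinom (l + k) k) + padicValNat 2 (fibFac k) + padicValNat 2 (fibFac l)
      = padicValNat 2 (fibFac (l + k)) := by
  obtain ⟨c, hc⟩ := fibFac_mul_dvd l k
  have hb : fibBinom (l + k) k = c := by
    have h : ∏ i ∈ Finset.range k, Nat.fib (l + k - i) = fibFac k * c := by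
      apply Nat.eq_of_mul_eq_mul_right (Nat.pos_of_ne_zero (fibFac_ne_zero l))
      rw [prod_fib_sub_mul, hc]
      ring
    unfold fibBinom
    rw [h]
    exact Nat.mul_div_cancel_left c (Nat.pos_of_ne_zero (fibFac_ne_zero k))
  have hc0 : c ≠ 0 := by
    rintro rfl
    exact fibFac_ne_zero (l + k) (by simpa using hc)
  rw [hb, hc, padicValNat.mul (mul_ne_zero (fibFac_ne_zero l) (fibFac_ne_zero k)) hc0,
    padicValNat.mul (fibFac_ne_zero l) (fibFac_ne_zero k)]
  ring

/-! ### Binary digit sums -/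

lemma digitSum_two_mul_add (x e : ℕ) (he : e < 2) :
    digitSum 2 (2 * x + e) = digitSum 2 x + e := by
  rcases Nat.eq_zero_or_pos (2 * x + e) with h | h
  · obtain ⟨rfl, rfl⟩ : x = 0 ∧ e = 0 := by omega
    simp [digitSum]
  · unfold digitSum
    rw [Nat.digits_def' (by norm_num) h, List.sum_cons, show (2 * x + e) % 2 = e by omega,
      show (2 * x + e) / 2 = x by omega, add_comm]

lemma digitSum_two_pow_mul_add (v x y : ℕ) (hy : y < 2 ^ v) :
    digitSum 2 (2 ^ v * x + y) = digitSum 2 x + digitSum 2 y := by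
  induction v generalizing y with
  | zero =>
    obtain rfl : y = 0 := by simpa using hy
    simp [digitSum]
  | succ v ih =>
    have h1 : 2 ^ (v + 1) * x + y = 2 * (2 ^ v * x + y / 2) + y % 2 := by
      rw [pow_succ']
      have := Nat.div_add_mod y 2
      linarith [mul_assoc 2 (2 ^ v) x]
    have hm : y % 2 < 2 := Nat.mod_lt _ (by norm_num)
    have h2 := digitSum_two_mul_add (y / 2) (y % 2) hm
    rw [Nat.div_add_mod] at h2
    rw [h1, digitSum_two_mul_add _ _ hm, ih _ (by rw [pow_succ'] at hy; omega), h2]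
    ring

/-- The number `(4^b - 1)/3`, whose binary expansion is `10…101` with `b` ones. -/
lemma exists_four_pow (b : ℕ) : ∃ J, 4 ^ b = 3 * J + 1 ∧ digitSum 2 J = b := by
  induction b with
  | zero => exact ⟨0, by simp [digitSum]⟩
  | succ b ih =>
    obtain ⟨J, h1, h2⟩ := ih
    refine ⟨2 * (2 * J + 0) + 1, by rw [pow_succ, h1]; ring, ?_⟩
    rw [digitSum_two_mul_add _ _ (by norm_num), digitSum_two_mul_add _ _ (by norm_num), h2]

/-- The quotient `⌊2^v N/3⌋` is `⌊N/3⌋` followed by `v` binary digits, which are all `0` if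
`3 ∣ N` and otherwise alternate between `0` and `1`; they end in `1` when `2^v N ≡ 1 (mod 3)` and in
`0` when `2^v N ≡ 2 (mod 3)`. -/
lemma digitSum_two_pow_mul_div_three (v N : ℕ) :
    digitSum 2 (2 ^ v * N / 3) = digitSum 2 (N / 3) +
      (if 2 ^ v * N % 3 = 0 then 0 else if 2 ^ v * N % 3 = 1 then (v + 1) / 2 else v / 2) := by
  have hN : N = 3 * (N / 3) + N % 3 := (Nat.div_add_mod N 3).symm
  have hr : N % 3 < 3 := Nat.mod_lt _ (by norm_num)
  generalize N / 3 = q at *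
  generalize N % 3 = r at *
  have e : 2 ^ v * N = 3 * (2 ^ v * q) + 2 ^ v * r := by rw [hN]; ring
  have hlt : 2 ^ v * r / 3 < 2 ^ v := by
    have : 2 ^ v * r < 2 ^ v * 3 := Nat.mul_lt_mul_of_pos_left hr (by positivity)
    omega
  rw [show 2 ^ v * N / 3 = 2 ^ v * q + 2 ^ v * r / 3 by omega,
    show 2 ^ v * N % 3 = 2 ^ v * r % 3 by omega, digitSum_two_pow_mul_add _ _ _ hlt]
  congr 1
  obtain ⟨J, hJ, hs⟩ := exists_four_pow (v / 2)
  have hs2 : digitSum 2 (2 * J) = v / 2 := by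
    have := digitSum_two_mul_add J 0 (by norm_num)
    simpa [hs] using this
  have hs3 : digitSum 2 (2 * (2 * J) + 1) = v / 2 + 1 := by
    rw [digitSum_two_mul_add _ _ (by norm_num), hs2]
  have hs0 : digitSum 2 0 = 0 := by simp [digitSum]
  rcases Nat.mod_two_eq_zero_or_one v with hv | hv
  · have hp : 2 ^ v = 3 * J + 1 := by
      rw [← hJ, show (4 : ℕ) = 2 ^ 2 by norm_num, ← pow_mul]
      congr 1
      omega
    rw [hp]
    interval_cases r
    · simp [hs0]
    · rw [show (3 * J + 1) * 1 / 3 = J by omega, show (3 * J + 1) * 1 % 3 = 1 by omega, hs]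
      simp
      omega
    · rw [show (3 * J + 1) * 2 / 3 = 2 * J by omega, show (3 * J + 1) * 2 % 3 = 2 by omega, hs2]
      simp
  · have hp : 2 ^ v = 6 * J + 2 := by
      rw [show 6 * J + 2 = 2 * 4 ^ (v / 2) by rw [hJ]; ring, show (4 : ℕ) = 2 ^ 2 by norm_num,
        ← pow_mul, ← pow_succ']
      congr 1
      omega
    rw [hp]
    interval_cases r
    · simp [hs0]
    · rw [show (6 * J + 2) * 1 / 3 = 2 * J by omega, show (6 * J + 2) * 1 % 3 = 2 by omega, hs2]
      simp
    · rw [show (6 * J + 2) * 2 / 3 = 2 * (2 * J) + 1 by omega,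
        show (6 * J + 2) * 2 % 3 = 1 by omega, hs3]
      simp
      omega

/-! ### The valuation of the Fibonomial coefficient -/

theorem fibonomial_two_adic_valuation_a_odd
    (a n : ℕ) (ha : 0 < a) (hn : 0 < n) (haodd : Odd a)
    (ε A δ : ℕ)
    (hε : ε = if n % 3 ≠ 0 then 1 else 0)
    (hA : A = (2 ^ a - 1) * n / (3 * 2 ^ padicValNat 2 n))
    (hδ : δ = if n % 2 = 1 then (n % 6 - 1) / 2
          else if n % 6 = 0 then 0
          else if n % 6 = 4 then (padicValNat 2 n + 1) / 2 + 1
          else (padicValNat 2 n + 2) / 2) :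
    (padicValNat 2 (fibBinom (2 ^ a * n) n) : ℤ)
        = δ + A - ((a - 1) / 2) * ε - padicValNat 2 (Nat.factorial A) ∧
    (padicValNat 2 (fibBinom (2 ^ a * n) n) : ℤ)
        = δ + digitSum 2 A - ((a - 1) / 2) * ε := by
  have hleg := padicValNat_factorial_add_digitSum A
  suffices h : (padicValNat 2 (fibBinom (2 ^ a * n) n) : ℤ)
        = δ + digitSum 2 A - ((a - 1) / 2) * ε by
    refine ⟨?_, h⟩
    rw [h]
    have : (padicValNat 2 (Nat.factorial A) : ℤ) + digitSum 2 A = A := by exact_mod_cast hleg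
    linarith
  have hv0 : n % 2 = 1 → padicValNat 2 n = 0 := fun h =>
    padicValNat.eq_zero_of_not_dvd (by omega)
  obtain ⟨u, hu⟩ : 2 ^ padicValNat 2 n ∣ n := pow_padicValNat_dvd
  generalize padicValNat 2 n = v at *
  obtain ⟨b, rfl⟩ := haodd
  obtain ⟨J, hJ, -⟩ := exists_four_pow b
  have hP : 2 ^ (2 * b + 1) = 6 * J + 2 := by
    rw [pow_succ, pow_mul, show (2 : ℕ) ^ 2 = 4 by norm_num, hJ]
    ring
  have hD1 := digitSum_two_pow_mul_div_three (2 * b + 1) n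
  have hD3 := digitSum_two_pow_mul_div_three v ((6 * J + 1) * u)
  rw [show 2 ^ v * ((6 * J + 1) * u) = (6 * J + 1) * n by rw [hu]; ring] at hD3
  have hAu : A = (6 * J + 1) * u / 3 := by
    rw [hA, hP, show 6 * J + 2 - 1 = 6 * J + 1 by omega,
      show (6 * J + 1) * n = (6 * J + 1) * u * 2 ^ v by rw [hu]; ring]
    exact Nat.mul_div_mul_right _ _ (by positivity)
  rw [← hAu] at hD3
  rw [hP] at hD1 ⊢
  have hval := padicValNat_fibBinom n ((6 * J + 1) * n)
  rw [show (6 * J + 1) * n + n = (6 * J + 2) * n by ring] at hval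
  have hV1 := padicValNat_fibFac_add ((6 * J + 2) * n)
  have hV2 := padicValNat_fibFac_add n
  have hV3 := padicValNat_fibFac_add ((6 * J + 1) * n)
  have ha2 : (((2 * b + 1 : ℕ) : ℤ) - 1) / 2 = b := by push_cast; omega
  rw [ha2]
  clear hA hAu hleg
  -- Only the product `J * k`, with `n = 3 * k + r`, is nonlinear in the remaining comparison.
  obtain ⟨k, r, hr, hk⟩ : ∃ k r, r < 3 ∧ n = 3 * k + r :=
    ⟨n / 3, n % 3, Nat.mod_lt _ (by norm_num), (Nat.div_add_mod n 3).symm⟩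
  have e1 : (6 * J + 2) * n = 18 * (J * k) + 6 * (J * r) + 2 * n := by rw [hk]; ring
  have e3 : (6 * J + 1) * n = 18 * (J * k) + 6 * (J * r) + n := by rw [hk]; ring
  generalize padicValNat 2 (fibBinom ((6 * J + 2) * n) n) = W at *
  rw [e1] at hD1 hV1 hval
  rw [e3] at hD3 hV3 hval
  clear hu e1 e3 hP hJ
  generalize J * k = X at *
  interval_cases r
  · rw [if_pos (by omega)] at hD1 hD3
    rw [if_neg (by omega)] at hε
    subst hε
    simp only [mul_zero, add_zero, Nat.cast_zero, sub_zero] at *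
    split_ifs at hδ <;> omega
  · rw [if_neg (by omega), if_neg (by omega)] at hD1
    rw [if_neg (by omega), if_pos (by omega)] at hD3
    rw [if_pos (by omega)] at hε
    subst hε
    simp only [mul_one, Nat.cast_one] at *
    split_ifs at hδ <;> omega
  · rw [if_neg (by omega), if_pos (by omega)] at hD1
    rw [if_neg (by omega), if_neg (by omega)] at hD3
    rw [if_pos (by omega)] at hε
    subst hε
    simp only [mul_one, Nat.cast_one] at *
    split_ifs at hδ <;> omega
end

section
/- Let p be a prime with p ≠ 2 and p ≠ 5, let a and n be positive integers, and let A = ⌊n(p^a − 1)/(p^{ν_p(n)}·z(p))⌋. If p ≡ ±1 (mod 5), then ν_p( C(p^a n, n)_F ) = A/(p−1) − a·{ n/(p^{ν_p(n)}·z(p)) } − ν_p(A!) = s_p(A)/(p−1) − a·{ n/(p^{ν_p(n)}·z(p)) }. -/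
/-! ### Binet's formula and roots of `X ^ 2 - X - 1` -/

/-- Binet's formula in an arbitrary commutative ring containing a root `x` of `X ^ 2 - X - 1`;
the conjugate root is `1 - x`, and `2 * x - 1` plays the role of `√5`. -/
theorem binet_of_root {R : Type*} [CommRing R] {x : R} (hx : x ^ 2 = x + 1) (n : ℕ) :
    x ^ n - (1 - x) ^ n = (2 * x - 1) * (Nat.fib n : R) := by
  induction n using Nat.twoStepInduction with
  | zero => simp
  | one => simp; ring
  | more n h0 h1 =>
    have hy : (1 - x) ^ 2 = (1 - x) + 1 := by linear_combination hx
    rw [Nat.fib_add_two, pow_add, pow_add, hx, hy]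
    push_cast
    linear_combination h0 + h1

/-- Since `p ≡ ±1 (mod 5)`, quadratic reciprocity makes `5` a square modulo `p`. -/
theorem exists_root_zmod {p : ℕ} [Fact p.Prime] (hp2 : p ≠ 2)
    (hmod : p % 5 = 1 ∨ p % 5 = 4) : ∃ x : ZMod p, x ^ 2 = x + 1 := by
  have : Fact (Nat.Prime 5) := ⟨by norm_num⟩
  have h5 : IsSquare ((5 : ℕ) : ZMod p) := by
    rw [← ZMod.exists_sq_eq_prime_iff_of_mod_four_eq_one (p := 5) (by norm_num) hp2]
    rcases hmod with h | h
    · exact ⟨1, by rw [← ZMod.natCast_mod, h]; rfl⟩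
    · exact ⟨2, by rw [← ZMod.natCast_mod, h]; rfl⟩
  obtain ⟨s, hs⟩ := h5
  have h2 : (2 : ZMod p) ≠ 0 := Ring.two_ne_zero (by rwa [ZMod.ringChar_zmod_n])
  refine ⟨(1 + s) / 2, ?_⟩
  push_cast at hs
  field_simp
  linear_combination -hs

theorem five_ne_zero_zmod {p : ℕ} [Fact p.Prime] (hp5 : p ≠ 5) : (5 : ZMod p) ≠ 0 := by
  intro h
  have : p ∣ 5 := (ZMod.natCast_eq_zero_iff 5 p).1 (by exact_mod_cast h)
  exact hp5 ((Nat.prime_dvd_prime_iff_eq Fact.out (by norm_num)).1 this)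

/-- The rank of appearance divides `p - 1`: by Fermat's little theorem both terms of Binet's
formula at `p - 1` are `1` in `ZMod p`. -/
theorem dvd_fib_sub_one {p : ℕ} [Fact p.Prime] (hp2 : p ≠ 2) (hp5 : p ≠ 5)
    (hmod : p % 5 = 1 ∨ p % 5 = 4) : p ∣ Nat.fib (p - 1) := by
  obtain ⟨x, hx⟩ := exists_root_zmod hp2 hmod
  have hxy : x * (1 - x) = -1 := by linear_combination -hx
  have hx0 : x ≠ 0 := by rintro rfl; simp at hxy
  have hy0 : 1 - x ≠ 0 := by intro h; simp [h] at hxy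
  have h := binet_of_root hx (p - 1)
  rw [ZMod.pow_card_sub_one_eq_one hx0, ZMod.pow_card_sub_one_eq_one hy0, sub_self] at h
  have hs : 2 * x - 1 ≠ 0 := by
    intro h0
    apply five_ne_zero_zmod (p := p) hp5
    linear_combination (2 * x - 1) * h0 - 4 * hx
  rw [← ZMod.natCast_eq_zero_iff]
  exact (mul_eq_zero.1 h.symm).resolve_left hs

/-- Hensel's lemma lifts the root of `X ^ 2 - X - 1` modulo `p` to `ℤ_[p]`; the last clause says
that `√5` is a `p`-adic unit. -/
theorem exists_root_padicInt {p : ℕ} [Fact p.Prime] (hp2 : p ≠ 2) (hp5 : p ≠ 5)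
    (hmod : p % 5 = 1 ∨ p % 5 = 4) :
    ∃ x : ℤ_[p], x ^ 2 = x + 1 ∧ ¬ (p : ℤ_[p]) ∣ 2 * x - 1 := by
  obtain ⟨g, hg⟩ := exists_root_zmod hp2 hmod
  obtain ⟨t, rfl⟩ := ZMod.intCast_surjective g
  have hF0 : (p : ℤ) ∣ t ^ 2 - t - 1 := by
    rw [← ZMod.intCast_zmod_eq_zero_iff_dvd]
    push_cast
    linear_combination hg
  have hF1 : ¬ (p : ℤ) ∣ 2 * t - 1 := by
    rw [← ZMod.intCast_zmod_eq_zero_iff_dvd]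
    push_cast
    intro h0
    apply five_ne_zero_zmod (p := p) hp5
    linear_combination (2 * (t : ZMod p) - 1) * h0 - 4 * hg
  set F : Polynomial ℤ := Polynomial.X ^ 2 - Polynomial.X - 1 with hF
  have hev : ∀ y : ℤ_[p], F.aeval y = y ^ 2 - y - 1 := by intro y; simp [hF]
  have hdv : ∀ y : ℤ_[p], F.derivative.aeval y = 2 * y - 1 := by
    intro y
    have h2 : (Polynomial.aeval y) (2 : Polynomial ℤ) = 2 := map_ofNat _ 2
    simp [hF, h2]
  have h0 : ‖F.aeval (t : ℤ_[p])‖ < 1 := by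
    rw [hev]; exact_mod_cast (PadicInt.norm_int_lt_one_iff_dvd (t ^ 2 - t - 1)).2 hF0
  have h1 : ‖F.derivative.aeval (t : ℤ_[p])‖ = 1 := by
    rw [hdv]
    refine le_antisymm (PadicInt.norm_le_one _) (not_lt.1 fun h => hF1 ?_)
    rw [← PadicInt.norm_int_lt_one_iff_dvd]
    exact_mod_cast h
  obtain ⟨x, hx, -, hx', -⟩ := hensels_lemma (F := F) (a := (t : ℤ_[p])) (by rw [h1]; simpa using h0)
  refine ⟨x, by rw [hev] at hx; linear_combination hx, fun hd => ?_⟩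
  rw [← PadicInt.norm_lt_one_iff_dvd, ← hdv, hx', h1] at hd
  exact lt_irrefl _ hd

/-! ### The `p`-adic valuation of a Fibonacci number -/

/-- Lifting the exponent in any domain of which the odd number `p` is a prime element. -/
theorem emultiplicity_pow_mul_sub_pow {R : Type*} [CommRing R] [IsDomain R] {p : ℕ}
    (hp : Prime (p : R)) (hp1 : Odd p) {x y : R} (hxy : (p : R) ∣ x - y) (hx : ¬ (p : R) ∣ x)
    {m : ℕ} (hm : ¬ (p : R) ∣ (m : R)) (b : ℕ) :
    emultiplicity (p : R) (x ^ (p ^ b * m) - y ^ (p ^ b * m))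
      = emultiplicity (p : R) (x - y) + b := by
  rw [pow_mul, pow_mul, emultiplicity_pow_sub_pow_of_prime hp _ _ hm,
    emultiplicity_pow_prime_pow_sub_pow_prime_pow hp hp1 hxy hx]
  · rw [← geom_sum₂_mul]
    exact hxy.mul_left _
  · exact fun h => hx (hp.dvd_of_dvd_pow h)

theorem emultiplicity_padicInt_natCast {p : ℕ} [Fact p.Prime] {m : ℕ} (hm : m ≠ 0) :
    emultiplicity (p : ℤ_[p]) (m : ℤ_[p]) = padicValNat p m := by
  rw [padicValNat_eq_emultiplicity hm]
  apply emultiplicity_eq_emultiplicity_iff.2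
  intro n
  have := PadicInt.pow_p_dvd_int_iff (p := p) n (m : ℤ)
  rw [Int.cast_natCast] at this
  rw [this]
  exact_mod_cast Iff.rfl

/-- The valuation law `ν_p(F_{zk}) = ν_p(F_z) + ν_p(k)`, by lifting the exponent in `ℤ_[p]`. -/
theorem padicValNat_fib_mul {p : ℕ} [Fact p.Prime] (hp2 : p ≠ 2) (hp5 : p ≠ 5)
    (hmod : p % 5 = 1 ∨ p % 5 = 4) {z : ℕ} (hz : 0 < z) (hpz : p ∣ Nat.fib z)
    {k : ℕ} (hk : 0 < k) :
    padicValNat p (Nat.fib (z * k)) = padicValNat p (Nat.fib z) + padicValNat p k := by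
  obtain ⟨x, hx, hs⟩ := exists_root_padicInt (p := p) hp2 hp5 hmod
  have hpr : Prime (p : ℤ_[p]) := PadicInt.prime_p
  have hxy : x * (1 - x) = -1 := by linear_combination -hx
  have hxu : ¬ (p : ℤ_[p]) ∣ x := fun h => hpr.not_isUnit
    (isUnit_of_dvd_unit (h.mul_right (1 - x)) (by rw [hxy]; exact isUnit_one.neg))
  -- As `√5` is a unit, Binet's formula identifies the valuation of `F_m` with that of
  -- `x ^ m - (1 - x) ^ m`.
  have key : ∀ m, 0 < m → emultiplicity (p : ℤ_[p]) (x ^ m - (1 - x) ^ m)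
      = padicValNat p (Nat.fib m) := by
    intro m hm
    rw [binet_of_root hx, emultiplicity_mul hpr, emultiplicity_eq_zero.2 hs, zero_add,
      emultiplicity_padicInt_natCast (Nat.fib_pos.2 hm).ne']
  obtain ⟨b, m, hm, rfl⟩ := Nat.exists_eq_pow_mul_and_not_dvd hk.ne' p (Fact.out : p.Prime).ne_one
  have hm0 : m ≠ 0 := by rintro rfl; simp at hm
  have hdvd : (p : ℤ_[p]) ∣ x ^ z - (1 - x) ^ z := by
    rw [binet_of_root hx]
    exact (Nat.cast_dvd_cast hpz).mul_left _
  have hm' : ¬ (p : ℤ_[p]) ∣ (m : ℤ_[p]) := by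
    rw [← emultiplicity_eq_zero, emultiplicity_padicInt_natCast hm0,
      padicValNat.eq_zero_of_not_dvd hm]
    rfl
  have h := emultiplicity_pow_mul_sub_pow hpr ((Fact.out : p.Prime).odd_of_ne_two hp2) hdvd
    (fun h => hxu (hpr.dvd_of_dvd_pow h)) hm' b
  rw [← pow_mul, ← pow_mul, key _ (Nat.mul_pos hz hk), key _ hz] at h
  have hb : padicValNat p (p ^ b * m) = b := by
    rw [padicValNat.mul (pow_ne_zero _ (Fact.out : p.Prime).ne_zero) hm0,
      padicValNat.prime_pow, padicValNat.eq_zero_of_not_dvd hm, add_zero]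
  rw [hb]
  exact_mod_cast h

theorem fibRank_spec {p : ℕ} (h : ∃ m, 0 < m ∧ p ∣ Nat.fib m) :
    0 < fibRank p ∧ p ∣ Nat.fib (fibRank p) :=
  Nat.sInf_mem (s := {m : ℕ | 0 < m ∧ p ∣ Nat.fib m}) h

/-- `p ∣ F_m` exactly when `z(p) ∣ m`, because `gcd (F_z, F_m) = F_{gcd (z, m)}`. -/
theorem dvd_fib_iff_fibRank_dvd {p : ℕ} (h : ∃ m, 0 < m ∧ p ∣ Nat.fib m) {m : ℕ} :
    p ∣ Nat.fib m ↔ fibRank p ∣ m := by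
  obtain ⟨hz, hpz⟩ := fibRank_spec h
  constructor
  · intro hm
    have hg : p ∣ Nat.fib (Nat.gcd (fibRank p) m) := by
      rw [Nat.fib_gcd]; exact Nat.dvd_gcd hpz hm
    have hle : fibRank p ≤ Nat.gcd (fibRank p) m :=
      Nat.sInf_le ⟨Nat.gcd_pos_of_pos_left _ hz, hg⟩
    have := Nat.le_antisymm hle (Nat.gcd_le_left _ hz)
    rw [this]
    exact Nat.gcd_dvd_right _ _
  · intro hm
    exact hpz.trans (Nat.fib_dvd _ _ hm)

/-! ### Fibonacci factorials -/

/-- The Fibonacci factorial (fibonorial) `F_1 F_2 ⋯ F_m`. -/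
def fibFact (m : ℕ) : ℕ := ∏ i ∈ Finset.range m, Nat.fib (i + 1)

theorem fibFact_succ (m : ℕ) : fibFact (m + 1) = fibFact m * Nat.fib (m + 1) :=
  Finset.prod_range_succ _ _

theorem fibFact_pos (m : ℕ) : 0 < fibFact m :=
  Finset.prod_pos fun i _ => Nat.fib_pos.2 i.succ_pos

/-- Integrality of the Fibonomial coefficients, by the Pascal-type recursion coming from
`F_{j+k+2} = F_{j+1} F_k + F_{j+2} F_{k+1}`. -/
theorem fibFact_mul_dvd : ∀ j k : ℕ, fibFact j * fibFact k ∣ fibFact (j + k)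
  | 0, k => by simp [fibFact]
  | j + 1, 0 => by simp [fibFact]
  | j + 1, k + 1 => by
    have h1 := fibFact_mul_dvd j (k + 1)
    have h2 := fibFact_mul_dvd (j + 1) k
    have e1 : fibFact (j + (k + 1)) = fibFact (j + k + 1) := rfl
    have e2 : fibFact (j + 1 + k) = fibFact (j + k + 1) := by congr 1; omega
    have e3 : fibFact (j + 1 + (k + 1)) = fibFact (j + k + 1) * Nat.fib ((j + 1) + k + 1) := by
      rw [show j + 1 + (k + 1) = (j + k + 1) + 1 by omega, fibFact_succ]
      congr 2; omega
    rw [e1] at h1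
    rw [e2] at h2
    rw [e3, Nat.fib_add, Nat.mul_add]
    apply dvd_add
    · have := (mul_dvd_mul_left (Nat.fib (j + 1)) h1).mul_right (Nat.fib k)
      rw [fibFact_succ j]
      convert this using 1 <;> ring
    · have := (mul_dvd_mul_left (Nat.fib (k + 1)) h2).mul_right (Nat.fib (j + 1 + 1))
      rw [fibFact_succ k]
      convert this using 1 <;> ring

theorem fibBinom_mul_fibFact {m k : ℕ} (h : k ≤ m) :
    fibBinom m k * fibFact k * fibFact (m - k) = fibFact m := by
  have hm : fibFact m = (∏ i ∈ Finset.range k, Nat.fib (m - i)) * fibFact (m - k) := by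
    induction k with
    | zero => simp
    | succ k ih =>
      rw [ih (by omega), Finset.prod_range_succ, show m - k = (m - (k + 1)) + 1 by omega,
        fibFact_succ]
      ring
  have hd : fibFact k ∣ ∏ i ∈ Finset.range k, Nat.fib (m - i) := by
    have := fibFact_mul_dvd k (m - k)
    rw [Nat.add_sub_cancel' h, hm] at this
    exact Nat.dvd_of_mul_dvd_mul_right (fibFact_pos _) this
  rw [hm, fibBinom]
  congr 1
  exact Nat.div_mul_cancel hd

/-- Only the indices divisible by `z = z(p)` contribute to the valuation of `F_1 ⋯ F_m`, and
`F_{zj}` contributes `ν_p(F_z) + ν_p(j)`. -/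
theorem padicValNat_fibFact {p : ℕ} [Fact p.Prime] (hp2 : p ≠ 2) (hp5 : p ≠ 5)
    (hmod : p % 5 = 1 ∨ p % 5 = 4) (h : ∃ m, 0 < m ∧ p ∣ Nat.fib m) (m : ℕ) :
    padicValNat p (fibFact m) = padicValNat p (Nat.fib (fibRank p)) * (m / fibRank p)
      + padicValNat p (m / fibRank p).factorial := by
  obtain ⟨hz, hpz⟩ := fibRank_spec h
  induction m with
  | zero => simp [fibFact]
  | succ m ih =>
    rw [fibFact_succ, padicValNat.mul (fibFact_pos m).ne' (Nat.fib_pos.2 (Nat.add_one_pos m)).ne', ih,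
      Nat.succ_div]
    split_ifs with hd
    · obtain ⟨k, hk⟩ := hd
      have hk0 : 0 < k := Nat.pos_of_ne_zero (by rintro rfl; simp at hk)
      have hq : m / fibRank p + 1 = k := by
        have := Nat.succ_div (a := m) (b := fibRank p)
        rw [if_pos ⟨k, hk⟩, hk, Nat.mul_div_cancel_left _ hz] at this
        exact this.symm
      rw [Nat.factorial_succ, padicValNat.mul (Nat.succ_ne_zero _) (Nat.factorial_ne_zero _), hk,
        padicValNat_fib_mul hp2 hp5 hmod hz hpz hk0, Nat.succ_eq_add_one, ← hq]
      ring
    · rw [padicValNat.eq_zero_of_not_dvd (mt (dvd_fib_iff_fibRank_dvd h).1 hd)]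
      simp

/-! ### Base-`p` digits of `⌊p ^ a n / z⌋` -/

theorem digitSum_add_mul {p : ℕ} (hp : 1 < p) {d : ℕ} (hd : d < p) (x : ℕ) :
    digitSum p (d + p * x) = d + digitSum p x := by
  -- `Nat.digits_def'` needs a positive argument, so `d + p * x = 0` is treated apart.
  rcases Nat.eq_zero_or_pos (d + p * x) with h0 | h0
  · have hd0 : d = 0 := by omega
    have hx0 : x = 0 := by
      have : p * x = 0 := by omega
      exact (Nat.mul_eq_zero.1 this).resolve_left (by omega)
    simp [hd0, hx0]
  · unfold digitSum
    rw [Nat.digits_def' hp h0, Nat.add_mul_mod_self_left, Nat.mod_eq_of_lt hd,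
      Nat.add_mul_div_left _ _ (by omega), Nat.div_eq_of_lt hd, zero_add, List.sum_cons]

theorem digitSum_pow_mul {p : ℕ} (hp : 1 < p) (v x : ℕ) :
    digitSum p (p ^ v * x) = digitSum p x := by
  induction v with
  | zero => simp
  | succ v ih =>
    have := digitSum_add_mul hp (d := 0) (by omega) (p ^ v * x)
    rw [pow_succ', mul_assoc, ← ih]
    simpa using this

/-- If `p - 1 = z c` and `n ≡ r (mod z)`, passing from `⌊p ^ a n / z⌋` to `⌊p ^ (a+1) n / z⌋`
appends the digit `r c`, since `r / z` has the periodic expansion `0.(rc)(rc)(rc)…`. -/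
theorem digitSum_pow_mul_div {p z c : ℕ} (hp : 1 < p) (hz : 0 < z) (hc : p = z * c + 1)
    (n a : ℕ) :
    digitSum p (p ^ a * n / z) = digitSum p (n / z) + a * (n % z * c) := by
  have hc0 : 0 < c := Nat.pos_of_ne_zero (by rintro rfl; omega)
  have hr : n % z < z := Nat.mod_lt _ hz
  have hd : n % z * c < p := by nlinarith
  have hmod : ∀ a, p ^ a * n % z = n % z := by
    intro a
    have h1 : p ≡ 1 [MOD z] := by
      rw [hc]; simp [Nat.ModEq]
    have h2 := (h1.pow a).mul_right n
    rwa [one_pow, one_mul] at h2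
  induction a with
  | zero => simp
  | succ a ih =>
    have h := Nat.div_add_mod (p ^ a * n) z
    rw [hmod] at h
    have hs : p ^ (a + 1) * n / z = n % z * c + p * (p ^ a * n / z) := by
      have he : p ^ (a + 1) * n = n % z + z * (n % z * c + p * (p ^ a * n / z)) := by
        calc p ^ (a + 1) * n = p * (z * (p ^ a * n / z) + n % z) := by rw [h]; ring
          _ = z * (p * (p ^ a * n / z)) + p * (n % z) := by ring
          _ = z * (p * (p ^ a * n / z)) + (z * c + 1) * (n % z) := by rw [← hc]
          _ = _ := by ring
      rw [he, Nat.add_mul_div_left _ _ hz, Nat.div_eq_of_lt hr, zero_add]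
    rw [hs, digitSum_add_mul hp hd, ih]
    ring

/-- Legendre's formula without truncated subtraction. -/
theorem legendre_add {p : ℕ} [Fact p.Prime] (m : ℕ) :
    (p - 1) * padicValNat p m.factorial + digitSum p m = m := by
  rw [sub_one_mul_padicValNat_factorial]
  exact Nat.sub_add_cancel (Nat.digit_sum_le p m)

theorem fibonomial_p_adic_valuation_pm_one
    (p a n : ℕ) (hp : p.Prime) (hp2 : p ≠ 2) (hp5 : p ≠ 5)
    (ha : 0 < a) (hn : 0 < n)
    (hmod : p % 5 = 1 ∨ p % 5 = 4)
    (A : ℕ)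
    (hA : A = n * (p ^ a - 1) / (p ^ padicValNat p n * fibRank p)) :
    (padicValNat p (fibBinom (p ^ a * n) n) : ℚ)
        = A / (p - 1)
          - a * Int.fract ((n : ℚ) / (p ^ padicValNat p n * fibRank p))
          - padicValNat p (Nat.factorial A) ∧
    (padicValNat p (fibBinom (p ^ a * n) n) : ℚ)
        = digitSum p A / (p - 1)
          - a * Int.fract ((n : ℚ) / (p ^ padicValNat p n * fibRank p)) := by
  have : Fact p.Prime := ⟨hp⟩
  have hp1 : 1 < p := hp.one_lt
  have hex : ∃ m, 0 < m ∧ p ∣ Nat.fib m :=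
    ⟨p - 1, by omega, dvd_fib_sub_one hp2 hp5 hmod⟩
  obtain ⟨hz, hpz⟩ := fibRank_spec hex
  obtain ⟨c, hc⟩ := (dvd_fib_iff_fibRank_dvd hex).1 (dvd_fib_sub_one hp2 hp5 hmod)
  have hval := padicValNat_fibFact hp2 hp5 hmod hex
  set z := fibRank p with hzdef
  have hpc : p = z * c + 1 := by omega
  have hc0 : 0 < c := Nat.pos_of_ne_zero (by rintro rfl; omega)
  obtain ⟨v, n', hn', hnn⟩ := Nat.exists_eq_pow_mul_and_not_dvd hn.ne' p hp.ne_one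
  have hn'0 : n' ≠ 0 := by rintro rfl; simp at hn'
  have hv : padicValNat p n = v := by
    rw [hnn, padicValNat.mul (pow_ne_zero _ hp.ne_zero) hn'0,
      padicValNat.prime_pow, padicValNat.eq_zero_of_not_dvd hn', add_zero]
  have hpv : 0 < p ^ v := pow_pos hp.pos _
  obtain ⟨d, hd⟩ : z ∣ p ^ a - 1 :=
    (Dvd.intro c hc.symm).trans (Nat.sub_one_dvd_pow_sub_one p a)
  have hpa : p ^ a = z * d + 1 := by
    have := Nat.one_le_pow a p hp.pos
    omega
  have hA' : A = n' * d := by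
    rw [hA, hv, hd, hnn, show p ^ v * n' * (z * d) = (p ^ v * z) * (n' * d) by ring,
      Nat.mul_div_cancel_left _ (Nat.mul_pos hpv hz)]
  -- `p ^ a n = z (n d) + n`, so the three floors are `q + n d`, `n d` and `q = ⌊n / z⌋`.
  have hN : p ^ a * n = n + z * (n * d) := by rw [hpa]; ring
  have hN1 : p ^ a * n / z = n / z + n * d := by rw [hN, Nat.add_mul_div_left _ _ hz]
  have hN2 : (p ^ a * n - n) / z = n * d := by
    rw [hN, Nat.add_sub_cancel_left, Nat.mul_div_cancel_left _ hz]
  have hle : n ≤ p ^ a * n := by rw [hN]; exact Nat.le_add_right _ _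
  have hmul := fibBinom_mul_fibFact hle
  have hC : fibBinom (p ^ a * n) n ≠ 0 := by
    intro h0
    rw [h0, zero_mul, zero_mul] at hmul
    exact (fibFact_pos _).ne hmul
  have hsum := congrArg (padicValNat p) hmul
  rw [padicValNat.mul (mul_ne_zero hC (fibFact_pos _).ne') (fibFact_pos _).ne',
    padicValNat.mul hC (fibFact_pos _).ne', hval, hval, hval, hN1, hN2] at hsum
  have hsum' : padicValNat p (fibBinom (p ^ a * n) n) + padicValNat p (n / z).factorial
      + padicValNat p (n * d).factorial = padicValNat p (n / z + n * d).factorial := by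
    linarith
  have hdig : digitSum p (n / z + n * d) = digitSum p (n / z) + a * (n % z * c) := by
    rw [← hN1, digitSum_pow_mul_div hp1 hz hpc]
  have hdB : digitSum p (n * d) = digitSum p A := by
    rw [hA', hnn, mul_assoc, digitSum_pow_mul hp1]
  have hl1 := legendre_add (p := p) (n / z)
  have hl2 := legendre_add (p := p) (n * d)
  have hl3 := legendre_add (p := p) (n / z + n * d)
  have hlA := legendre_add (p := p) A
  rw [hdig] at hl3
  rw [hdB] at hl2
  have hmain : (p - 1) * padicValNat p (fibBinom (p ^ a * n) n) + a * (n % z * c)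
      = digitSum p A := by
    have := congrArg (fun t => (p - 1) * t) hsum'
    simp only [mul_add] at this
    omega
  -- As `p ≡ 1 (mod z)`, removing the factor `p ^ v` from `n` does not change its residue mod `z`.
  have hres : n' % z = n % z := by
    have h1 : p ≡ 1 [MOD z] := by
      rw [hpc]; simp [Nat.ModEq]
    have h2 := (h1.pow v).mul_right n'
    rw [one_pow, one_mul, ← hnn] at h2
    exact h2.symm
  have hfr : Int.fract ((n : ℚ) / (p ^ padicValNat p n * z)) = (n % z : ℕ) / (z : ℚ) := by
    have hpvQ : (p : ℚ) ^ v ≠ 0 := by exact_mod_cast hpv.ne'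
    rw [← hres, ← Int.fract_div_natCast_eq_div_natCast_mod, hv, hnn]
    push_cast
    rw [mul_div_mul_left _ _ hpvQ]
  have hpQ : (p : ℚ) - 1 = z * c := by rw [hpc]; push_cast; ring
  have hzQ : (z : ℚ) ≠ 0 := by exact_mod_cast hz.ne'
  have hcQ : (c : ℚ) ≠ 0 := by exact_mod_cast hc0.ne'
  rw [hc] at hmain hlA
  have hmainQ : (z * c : ℚ) * padicValNat p (fibBinom (p ^ a * n) n) + a * ((n % z : ℕ) * c)
      = digitSum p A := by exact_mod_cast hmain
  have hlAQ : (z * c : ℚ) * padicValNat p A.factorial + digitSum p A = A := by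
    exact_mod_cast hlA
  rw [hfr, hpQ]
  generalize padicValNat p (fibBinom (p ^ a * n) n) = V at *
  have h2 : (V : ℚ) = digitSum p A / (z * c) - a * ((n % z : ℕ) / (z : ℚ)) := by
    rw [← hmainQ]
    field_simp
    ring
  refine ⟨?_, h2⟩
  rw [h2, ← hlAQ]
  field_simp
  ring
end
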